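/- In lossless transmission of arbitrarily correlated sources (S1, S2) over a DM two-way channel p(y1,y2|x1,x2), source-channel rate b = 1 is achievable (even using restricted encoders, whose channel inputs depend only on the user's own source) if H(S1|S2) < I(X1;Y2|X2,S2,Q) and H(S2|S1) < I(X2;Y1|X1,S1,Q) for some joint distribution of the form p(q,s1,s2,x1,x2,y1,y2) = p(q)·p(s1,s2)·p(x1|q,s1)·p(x2|q,s2)·p(y1,y2|x1,x2), where p(s1,s2) is the given source pmf and p(y1,y2|x1,x2) the given channel law. -/

import Mathlib

open scoped BigOperators Classical

noncomputable section

/-- Probability that the random variable `X` equals `a`, under the pmf `μ`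
on the finite sample space `Ω`. -/
def prD {Ω α : Type} [Fintype Ω] (μ : Ω → ℝ) (X : Ω → α) (a : α) : ℝ :=
  ∑ ω, if X ω = a then μ ω else 0

/-- Shannon entropy (in nats) of the random variable `X` under the pmf `μ`. -/
def ent {Ω α : Type} [Fintype Ω] [Fintype α] (μ : Ω → ℝ) (X : Ω → α) : ℝ :=
  -∑ a, prD μ X a * Real.log (prD μ X a)

/-- Conditional entropy `H(X | Y)` under the pmf `μ`. -/
def condEnt {Ω α β : Type} [Fintype Ω] [Fintype α] [Fintype β]
    (μ : Ω → ℝ) (X : Ω → α) (Y : Ω → β) : ℝ :=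
  ent μ (fun ω => (X ω, Y ω)) - ent μ Y

/-- Mutual information `I(X ; Y)` under the pmf `μ`. -/
def mutInf {Ω α β : Type} [Fintype Ω] [Fintype α] [Fintype β]
    (μ : Ω → ℝ) (X : Ω → α) (Y : Ω → β) : ℝ :=
  ent μ X + ent μ Y - ent μ (fun ω => (X ω, Y ω))

/-- Conditional mutual information `I(X ; Y | Z)` under the pmf `μ`. -/
def condMutInf {Ω α β γ : Type} [Fintype Ω] [Fintype α] [Fintype β] [Fintype γ]
    (μ : Ω → ℝ) (X : Ω → α) (Y : Ω → β) (Z : Ω → γ) : ℝ :=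
  condEnt μ X Z - condEnt μ X (fun ω => (Y ω, Z ω))

/-- `p` is a probability mass function on the finite type `α`. -/
def IsPmf {α : Type} [Fintype α] (p : α → ℝ) : Prop :=
  (∀ a, 0 ≤ p a) ∧ ∑ a, p a = 1


/-- Average error probability for the two-way channel with restricted encoders:
user `i` sends `X_i^n = f_i(S_i^m)` (no dependence on past channel outputs), and
user `i` decodes the other user's source block from its own source block and its
received channel outputs. -/
def twErrRestricted {S1 S2 X1 X2 Y1 Y2 : Type} [Fintype S1] [Fintype S2]
    [Fintype X1] [Fintype X2] [Fintype Y1] [Fintype Y2]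
    (pS : S1 × S2 → ℝ) (chan : X1 → X2 → Y1 × Y2 → ℝ) (m n : ℕ)
    (f1 : (Fin m → S1) → Fin n → X1) (f2 : (Fin m → S2) → Fin n → X2)
    (g1 : (Fin m → S1) → (Fin n → Y1) → Fin m → S2)
    (g2 : (Fin m → S2) → (Fin n → Y2) → Fin m → S1) : ℝ :=
  ∑ sb : Fin m → S1 × S2, ∑ yb : Fin n → Y1 × Y2,
    ((∏ i, pS (sb i)) *
      ∏ j, chan (f1 (fun i => (sb i).1) j) (f2 (fun i => (sb i).2) j) (yb j)) *
    (if g1 (fun i => (sb i).1) (fun j => (yb j).1) = (fun i => (sb i).2)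
        ∧ g2 (fun i => (sb i).2) (fun j => (yb j).2) = (fun i => (sb i).1)
      then 0 else 1)

/-- Source-channel rate `b` is achievable over the two-way channel with restricted
encoders. -/
def twAchievableRestricted {S1 S2 X1 X2 Y1 Y2 : Type} [Fintype S1] [Fintype S2]
    [Fintype X1] [Fintype X2] [Fintype Y1] [Fintype Y2]
    (pS : S1 × S2 → ℝ) (chan : X1 → X2 → Y1 × Y2 → ℝ) (b : ℝ) : Prop :=
  ∀ ε : ℝ, 0 < ε → ∃ m n : ℕ, 0 < m ∧ 0 < n ∧ (n : ℝ) = b * m ∧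
    ∃ (f1 : (Fin m → S1) → Fin n → X1) (f2 : (Fin m → S2) → Fin n → X2)
      (g1 : (Fin m → S1) → (Fin n → Y1) → Fin m → S2)
      (g2 : (Fin m → S2) → (Fin n → Y2) → Fin m → S1),
      twErrRestricted pS chan m n f1 f2 g1 g2 < ε

/-- The joint single-letter distribution
`p(q,s1,s2,x1,x2,y1,y2) = p(q) p(s1,s2) p(x1|q,s1) p(x2|q,s2) p(y1,y2|x1,x2)`. -/
def twJointMeasure {S1 S2 X1 X2 Y1 Y2 : Type} (nq : ℕ) (pq : Fin nq → ℝ)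
    (pS : S1 × S2 → ℝ) (px1 : Fin nq → S1 → X1 → ℝ) (px2 : Fin nq → S2 → X2 → ℝ)
    (chan : X1 → X2 → Y1 × Y2 → ℝ) :
    Fin nq × (S1 × S2) × X1 × X2 × (Y1 × Y2) → ℝ :=
  fun z => pq z.1 * pS z.2.1 * px1 z.1 z.2.1.1 z.2.2.1 * px2 z.1 z.2.1.2 z.2.2.2.1 *
    chan z.2.2.1 z.2.2.2.1 z.2.2.2.2

lemma sum_prod_pi {ι α : Type} [Fintype ι] [Fintype α] [DecidableEq ι] (F : ι → α → ℝ) :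
    ∑ x : ι → α, ∏ i, F i (x i) = ∏ i, ∑ a, F i a :=
  (Fintype.prod_sum F).symm

lemma exists_le_of_weighted_sum_le {ι : Type} [Fintype ι] {w E : ι → ℝ} {B : ℝ}
    (hw : IsPmf w) (h : ∑ i, w i * E i ≤ B) : ∃ i, E i ≤ B := by
  by_contra! hc
  have h1 : ∑ i, w i * (E i - B) ≤ 0 := by
    simp only [mul_sub, Finset.sum_sub_distrib, ← Finset.sum_mul, hw.2]
    linarith
  have h2 : ∀ i ∈ Finset.univ, 0 ≤ w i * (E i - B) := fun i _ =>
    mul_nonneg (hw.1 i) (sub_nonneg.2 (hc i).le)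
  have h3 := (Finset.sum_eq_zero_iff_of_nonneg h2).1 (le_antisymm h1 (Finset.sum_nonneg h2))
  have h4 : ∀ i, w i = 0 := fun i => by
    have := h3 i (Finset.mem_univ i)
    rcases mul_eq_zero.1 this with h | h
    · exact h
    · linarith [hc i]
  have := hw.2
  simp [h4] at this

lemma exists_exp_moment_lt_one {Ω : Type} [Fintype Ω] {μ L : Ω → ℝ}
    (hμ : ∑ ω, μ ω = 1) (hL : 0 < ∑ ω, μ ω * L ω) :
    ∃ ρ : ℝ, 0 < ρ ∧ ∑ ω, μ ω * Real.exp (-ρ * L ω) < 1 := by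
  have hd : HasDerivAt (fun ρ : ℝ => ∑ ω, μ ω * Real.exp (-ρ * L ω))
      (∑ ω, μ ω * (Real.exp (-0 * L ω) * (-1 * L ω))) 0 := by
    refine HasDerivAt.fun_sum fun ω _ => ?_
    exact ((((hasDerivAt_id (0 : ℝ)).neg).mul_const (L ω)).exp).const_mul (μ ω)
  have hneg : (∑ ω, μ ω * (Real.exp (-0 * L ω) * (-1 * L ω))) < 0 := by
    have : (∑ ω, μ ω * (Real.exp (-0 * L ω) * (-1 * L ω))) = - ∑ ω, μ ω * L ω := by
      simp
    linarith
  have ht := ((hasDerivWithinAt_iff_tendsto_slope' Set.self_notMem_Ioi).1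
    (hd.hasDerivWithinAt (s := Set.Ioi 0))).eventually
    (gt_mem_nhds hneg)
  obtain ⟨ρ, h1, h2⟩ := (ht.and self_mem_nhdsWithin).exists
  have h2' : (0 : ℝ) < ρ := h2
  refine ⟨ρ, h2', ?_⟩
  rw [slope_def_field, sub_zero] at h1
  have h3 := (div_neg_iff.1 h1).resolve_left (fun h => absurd h.2 (not_lt.2 h2'.le))
  simp only [neg_zero, zero_mul, Real.exp_zero, mul_one, hμ] at h3
  linarith [h3.1]

/-- Probability of the codebook `f` when the codewords `f a` are drawn independently from `pa a`. -/
def codeWeight {A X : Type} [Fintype A] (pa : A → X → ℝ) (f : A → X) : ℝ := ∏ a, pa a (f a)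

section Codebook

variable {A X : Type} [Fintype A] [Fintype X]

lemma isPmf_codeWeight {pa : A → X → ℝ} (hpa : ∀ a, IsPmf (pa a)) :
    IsPmf (codeWeight pa) := by
  refine ⟨fun f => Finset.prod_nonneg fun a _ => (hpa a).1 _, ?_⟩
  simp only [codeWeight]
  rw [sum_prod_pi]
  simp [(hpa _).2]

lemma sum_codeWeight_mul {pa : A → X → ℝ} (hpa : ∀ a, IsPmf (pa a)) (a : A) (F : X → ℝ) :
    ∑ f, codeWeight pa f * F (f a) = ∑ x, pa a x * F x := by
  have h1 : ∀ f : A → X, codeWeight pa f * F (f a)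
      = ∏ c, pa c (f c) * (if c = a then F (f c) else 1) := fun f => by
    rw [Finset.prod_mul_distrib, Finset.prod_ite_eq' Finset.univ a (fun c => F (f c))]
    simp [codeWeight]
  simp only [h1]
  rw [sum_prod_pi (fun c x => pa c x * (if c = a then F x else 1)),
    Finset.prod_eq_single a (fun c _ hc => by simp [hc, (hpa c).2]) (by simp)]
  simp

lemma sum_codeWeight_mul_mul {pa : A → X → ℝ} (hpa : ∀ a, IsPmf (pa a)) {a b : A} (hab : b ≠ a)
    (F G : X → ℝ) :
    ∑ f, codeWeight pa f * (F (f a) * G (f b)) = (∑ x, pa a x * F x) * ∑ x, pa b x * G x := by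
  have h1 : ∀ f : A → X, codeWeight pa f * (F (f a) * G (f b))
      = ∏ c, pa c (f c) * ((if c = a then F (f c) else 1) * (if c = b then G (f c) else 1)) :=
    fun f => by
    rw [Finset.prod_mul_distrib, Finset.prod_mul_distrib,
      Finset.prod_ite_eq' Finset.univ a (fun c => F (f c)),
      Finset.prod_ite_eq' Finset.univ b (fun c => G (f c))]
    simp [codeWeight]
  simp only [h1]
  rw [sum_prod_pi
      (fun c x => pa c x * ((if c = a then F x else 1) * (if c = b then G x else 1))),
    Finset.prod_eq_mul a b hab.symm (fun c _ hc => by simp [hc.1, hc.2, (hpa c).2])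
      (by simp) (by simp)]
  simp [hab, hab.symm]

/-- Mean of the score `u a x` summed over all messages `a`, for codewords `x` drawn from `pa a`. -/
def meanScore (pa u : A → X → ℝ) : ℝ := ∑ a, ∑ x, pa a x * u a x

/-- Mean score collected by the pairs whose score does not exceed the threshold. -/
def lowScore (pa u : A → X → ℝ) (γ : ℝ) : ℝ :=
  ∑ a, ∑ x, pa a x * (u a x * if γ * meanScore pa u < u a x then 0 else 1)

/-- Union bound for threshold decoding: `1` if the true message `a` is below the threshold `t`,
plus the number of other messages above it. -/
def confusion (u : A → X → ℝ) (t : ℝ) (f : A → X) (a : A) : ℝ :=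
  (if t < u a (f a) then 0 else 1) + ∑ a', if a' ≠ a ∧ t < u a' (f a') then 1 else 0

lemma sum_codeWeight_confusion_le {pa u : A → X → ℝ} (hpa : ∀ a, IsPmf (pa a))
    (hu : ∀ a x, 0 ≤ u a x) {γ : ℝ} (hγ : 0 < γ) :
    ∑ f, codeWeight pa f * ∑ a, u a (f a) * confusion u (γ * meanScore pa u) f a
      ≤ lowScore pa u γ + γ⁻¹ * meanScore pa u := by
  set D := meanScore pa u with hD
  have hD0 : 0 ≤ D := Finset.sum_nonneg fun a _ => Finset.sum_nonneg fun x _ =>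
    mul_nonneg ((hpa a).1 x) (hu a x)
  have h1 : ∑ f, codeWeight pa f * ∑ a, u a (f a) * confusion u (γ * D) f a
      = ∑ a, ∑ f, codeWeight pa f * (u a (f a) * if γ * D < u a (f a) then 0 else 1)
        + ∑ a, ∑ a', ∑ f, codeWeight pa f *
          (u a (f a) * if a' ≠ a ∧ γ * D < u a' (f a') then 1 else 0) := by
    have h2 : ∀ a, ∑ a', ∑ f, codeWeight pa f *
          (u a (f a) * if a' ≠ a ∧ γ * D < u a' (f a') then 1 else 0)
        = ∑ f, codeWeight pa f *
          (u a (f a) * ∑ a', if a' ≠ a ∧ γ * D < u a' (f a') then 1 else 0) := fun a => by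
      rw [Finset.sum_comm]
      simp only [Finset.mul_sum]
    simp only [h2, confusion, mul_add, Finset.mul_sum, Finset.sum_add_distrib]
    rw [Finset.sum_comm, Finset.sum_comm (s := (Finset.univ : Finset (A → X)))
      (t := (Finset.univ : Finset A))]
  have hlow : ∑ a, ∑ f, codeWeight pa f * (u a (f a) * if γ * D < u a (f a) then 0 else 1)
      = lowScore pa u γ :=
    Finset.sum_congr rfl fun a _ =>
      sum_codeWeight_mul hpa a fun x => u a x * if γ * D < u a x then 0 else 1
  have hpair : ∀ a a', ∑ f, codeWeight pa f *
      (u a (f a) * if a' ≠ a ∧ γ * D < u a' (f a') then 1 else 0)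
      ≤ (∑ x, pa a x * u a x) * ∑ x, pa a' x * if γ * D < u a' x then 1 else 0 := by
    intro a a'
    by_cases h : a' = a
    · simp only [h, ne_eq, not_true_eq_false, false_and, if_false, mul_zero,
        Finset.sum_const_zero]
      refine mul_nonneg (Finset.sum_nonneg fun x _ => mul_nonneg ((hpa a).1 x) (hu a x))
        (Finset.sum_nonneg fun x _ => mul_nonneg ((hpa a).1 x) ?_)
      split_ifs <;> norm_num
    · simp only [h, ne_eq, not_false_eq_true, true_and]
      exact (sum_codeWeight_mul_mul hpa h (u a) fun x => if γ * D < u a' x then 1 else 0).le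
  rw [h1, hlow]
  gcongr
  calc ∑ a, ∑ a', ∑ f, codeWeight pa f *
          (u a (f a) * if a' ≠ a ∧ γ * D < u a' (f a') then 1 else 0)
      ≤ ∑ a, ∑ a', (∑ x, pa a x * u a x) * ∑ x, pa a' x * if γ * D < u a' x then 1 else 0 :=
        Finset.sum_le_sum fun a _ => Finset.sum_le_sum fun a' _ => hpair a a'
    _ = ∑ a', ∑ x, pa a' x * (D * if γ * D < u a' x then 1 else 0) := by
        rw [← Finset.sum_mul_sum, ← meanScore, ← hD, Finset.mul_sum]
        simp only [Finset.mul_sum, mul_left_comm]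
    _ ≤ ∑ a', ∑ x, pa a' x * (γ⁻¹ * u a' x) := by
        refine Finset.sum_le_sum fun a' _ => Finset.sum_le_sum fun x _ =>
          mul_le_mul_of_nonneg_left ?_ ((hpa a').1 x)
        split_ifs with h
        · rw [mul_one, inv_mul_eq_div, le_div_iff₀ hγ, mul_comm]
          exact h.le
        · rw [mul_zero]
          exact mul_nonneg (inv_nonneg.2 hγ.le) (hu a' x)
    _ = γ⁻¹ * D := by
        simp only [hD, meanScore, Finset.mul_sum, mul_left_comm]

lemma exists_threshold_decoder [Nonempty A] {C : Type} (good : C → A → Prop) :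
    ∃ g : C → A, ∀ c a, (if g c = a then (0 : ℝ) else 1)
      ≤ (if good c a then 0 else 1) + ∑ a', if a' ≠ a ∧ good c a' then 1 else 0 := by
  refine ⟨fun c => Classical.epsilon (good c), fun c a => ?_⟩
  have hs : ∀ a' ∈ Finset.univ, (0 : ℝ) ≤ if a' ≠ a ∧ good c a' then 1 else 0 := fun a' _ => by
    split_ifs <;> norm_num
  by_cases hg : good c a
  · by_cases he : Classical.epsilon (good c) = a
    · simp [he, hg]
    · have := Finset.single_le_sum hs (Finset.mem_univ (Classical.epsilon (good c)))
      rw [if_pos ⟨he, Classical.epsilon_spec ⟨a, hg⟩⟩] at this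
      simpa [he, hg] using this
  · have := Finset.sum_nonneg hs
    rw [if_neg hg]
    split_ifs <;> linarith

end Codebook

section OneShot

variable {A B X Z Y : Type} [Fintype A] [Fintype B] [Fintype X] [Fintype Z] [Fintype Y]

/-- Joint probability of source pair `(a, b)` and channel output `y` given inputs `(x, z)`. -/
def pairScore (p : A → B → ℝ) (V : X → Z → Y → ℝ) (b : B) (z : Z) (y : Y) : A → X → ℝ :=
  fun a x => p a b * V x z y

/-- Probability that the true pair of the receiver knowing `(b, z, y)` is below threshold. -/
def outage (p : A → B → ℝ) (pa : A → X → ℝ) (pb : B → Z → ℝ) (V : X → Z → Y → ℝ) (γ : ℝ) : ℝ :=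
  ∑ b, ∑ y, ∑ z, pb b z * lowScore pa (pairScore p V b z y) γ

/-- Union bound on the error probability of the threshold decoder of the receiver knowing `b`,
for the codebooks `f` and `g`. -/
def userError (p : A → B → ℝ) (pa : A → X → ℝ) (V : X → Z → Y → ℝ) (γ : ℝ)
    (f : A → X) (g : B → Z) : ℝ :=
  ∑ b, ∑ y, ∑ a, pairScore p V b (g b) y a (f a) *
    confusion (pairScore p V b (g b) y) (γ * meanScore pa (pairScore p V b (g b) y)) f a

lemma sum_userError_le {p : A → B → ℝ} (hp : ∀ a b, 0 ≤ p a b) (hp1 : ∑ a, ∑ b, p a b = 1)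
    {pa : A → X → ℝ} (hpa : ∀ a, IsPmf (pa a)) {pb : B → Z → ℝ} (hpb : ∀ b, IsPmf (pb b))
    {V : X → Z → Y → ℝ} (hV : ∀ x z, IsPmf (V x z)) {γ : ℝ} (hγ : 0 < γ) :
    ∑ f, codeWeight pa f * ∑ g, codeWeight pb g * userError p pa V γ f g
      ≤ outage p pa pb V γ + γ⁻¹ := by
  have hmass : ∑ b, ∑ y, ∑ z, pb b z * meanScore pa (pairScore p V b z y) = 1 := by
    calc ∑ b, ∑ y, ∑ z, pb b z * meanScore pa (pairScore p V b z y)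
        = ∑ b, ∑ z, ∑ a, ∑ x, ∑ y, pb b z * (pa a x * (p a b * V x z y)) := by
          refine Finset.sum_congr rfl fun b _ => ?_
          rw [Finset.sum_comm]
          refine Finset.sum_congr rfl fun z _ => ?_
          simp only [meanScore, pairScore, Finset.mul_sum]
          rw [Finset.sum_comm]
          refine Finset.sum_congr rfl fun a _ => ?_
          rw [Finset.sum_comm]
      _ = ∑ b, ∑ a, p a b := by
          simp only [← Finset.mul_sum, (hV _ _).2, mul_one, ← Finset.sum_mul, (hpa _).2,
            (hpb _).2, one_mul]
      _ = 1 := by rw [Finset.sum_comm, hp1]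
  have hexp : ∑ f, codeWeight pa f * ∑ g, codeWeight pb g * userError p pa V γ f g
      = ∑ b, ∑ y, ∑ z, pb b z * ∑ f, codeWeight pa f *
          ∑ a, pairScore p V b z y a (f a) *
            confusion (pairScore p V b z y) (γ * meanScore pa (pairScore p V b z y)) f a := by
    have h1 : ∀ f : A → X, ∑ g, codeWeight pb g * userError p pa V γ f g
        = ∑ b, ∑ y, ∑ z, pb b z * ∑ a, pairScore p V b z y a (f a) *
            confusion (pairScore p V b z y) (γ * meanScore pa (pairScore p V b z y)) f a := by
      intro f
      simp only [userError]
      simp_rw [Finset.mul_sum (s := (Finset.univ : Finset B)),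
        Finset.mul_sum (s := (Finset.univ : Finset Y))]
      rw [Finset.sum_comm]
      refine Finset.sum_congr rfl fun b _ => ?_
      rw [Finset.sum_comm]
      refine Finset.sum_congr rfl fun y _ => ?_
      exact sum_codeWeight_mul hpb b fun z => ∑ a, pairScore p V b z y a (f a) *
            confusion (pairScore p V b z y) (γ * meanScore pa (pairScore p V b z y)) f a
    simp only [h1]
    simp_rw [Finset.mul_sum (s := (Finset.univ : Finset B)),
      Finset.mul_sum (s := (Finset.univ : Finset Y)),
      Finset.mul_sum (s := (Finset.univ : Finset Z))]
    rw [Finset.sum_comm]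
    refine Finset.sum_congr rfl fun b _ => ?_
    rw [Finset.sum_comm]
    refine Finset.sum_congr rfl fun y _ => ?_
    rw [Finset.sum_comm]
    refine Finset.sum_congr rfl fun z _ => ?_
    rw [Finset.mul_sum]
    exact Finset.sum_congr rfl fun f _ => mul_left_comm _ _ _
  rw [hexp]
  calc _ ≤ ∑ b, ∑ y, ∑ z, pb b z * (lowScore pa (pairScore p V b z y) γ
            + γ⁻¹ * meanScore pa (pairScore p V b z y)) :=
        Finset.sum_le_sum fun b _ => Finset.sum_le_sum fun y _ => Finset.sum_le_sum fun z _ =>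
          mul_le_mul_of_nonneg_left (sum_codeWeight_confusion_le hpa
            (fun a x => mul_nonneg (hp a b) ((hV x z).1 y)) hγ) ((hpb b).1 z)
    _ = outage p pa pb V γ + γ⁻¹ := by
        simp only [mul_add, Finset.sum_add_distrib, outage, mul_left_comm _ γ⁻¹,
          ← Finset.mul_sum]
        rw [hmass, mul_one]

lemma exists_decoder_userError {W : Type} [Nonempty A] {p : A → B → ℝ} (hp : ∀ a b, 0 ≤ p a b)
    (pa : A → X → ℝ) {V : X → W → Y → ℝ} (hV : ∀ x z y, 0 ≤ V x z y) (γ : ℝ)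
    (f : A → X) (g : B → W) :
    ∃ d : B → Y → A,
      ∑ a, ∑ b, ∑ y, p a b * V (f a) (g b) y * (if d b y = a then 0 else 1)
        ≤ userError p pa V γ f g := by
  obtain ⟨d, hd⟩ := exists_threshold_decoder (fun (c : B × Y) a =>
    γ * meanScore pa (pairScore p V c.1 (g c.1) c.2) < pairScore p V c.1 (g c.1) c.2 a (f a))
  refine ⟨fun b y => d (b, y), ?_⟩
  rw [Finset.sum_comm]
  refine Finset.sum_le_sum fun b _ => ?_
  rw [Finset.sum_comm]
  refine Finset.sum_le_sum fun y _ => Finset.sum_le_sum fun a _ => ?_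
  exact mul_le_mul_of_nonneg_left (hd (b, y) a) (mul_nonneg (hp a b) (hV _ _ y))

lemma exists_code {Y' Q : Type} [Fintype Y'] [Fintype Q] {p : A → B → ℝ}
    (hp : ∀ a b, 0 ≤ p a b) (hp1 : ∑ a, ∑ b, p a b = 1) {pq : Q → ℝ} (hpq : IsPmf pq)
    {pa : Q → A → X → ℝ} (hpa : ∀ q a, IsPmf (pa q a))
    {pb : Q → B → Z → ℝ} (hpb : ∀ q b, IsPmf (pb q b))
    {c : X → Z → Y' → Y → ℝ} (hc : ∀ x z y' y, 0 ≤ c x z y' y)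
    (hc1 : ∀ x z, ∑ y', ∑ y, c x z y' y = 1) {γ : ℝ} (hγ : 0 < γ) :
    ∃ (f : A → X) (g : B → Z) (d' : A → Y' → B) (d : B → Y → A),
      ∑ a, ∑ b, ∑ y', ∑ y, p a b * c (f a) (g b) y' y *
          (if d' a y' = b ∧ d b y = a then 0 else 1)
        ≤ ∑ q, pq q * outage p (pa q) (pb q) (fun x z y => ∑ y', c x z y' y) γ
          + ∑ q, pq q * outage (fun b a => p a b) (pb q) (pa q)
              (fun z x y' => ∑ y, c x z y' y) γ + 2 * γ⁻¹ := by
  set V : X → Z → Y → ℝ := fun x z y => ∑ y', c x z y' y with hVdef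
  set V' : Z → X → Y' → ℝ := fun z x y' => ∑ y, c x z y' y with hV'def
  have hV : ∀ x z, IsPmf (V x z) := fun x z =>
    ⟨fun y => Finset.sum_nonneg fun y' _ => hc x z y' y, by
      simp only [hVdef]; rw [Finset.sum_comm, hc1]⟩
  have hV' : ∀ z x, IsPmf (V' z x) := fun z x =>
    ⟨fun y' => Finset.sum_nonneg fun y _ => hc x z y' y, hc1 x z⟩
  have hA : Nonempty A := by
    by_contra h
    rw [not_nonempty_iff] at h
    simp at hp1
  have hB : Nonempty B := by
    by_contra h
    rw [not_nonempty_iff] at h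
    simp at hp1
  have hp1' : ∑ b, ∑ a, p a b = 1 := by rw [Finset.sum_comm, hp1]
  have havg : ∑ q, pq q * ∑ f, codeWeight (pa q) f * ∑ g, codeWeight (pb q) g *
      (userError p (pa q) V γ f g + userError (fun b a => p a b) (pb q) V' γ g f)
      ≤ ∑ q, pq q * outage p (pa q) (pb q) V γ
          + ∑ q, pq q * outage (fun b a => p a b) (pb q) (pa q) V' γ + 2 * γ⁻¹ := by
    calc _ ≤ ∑ q, pq q * ((outage p (pa q) (pb q) V γ + γ⁻¹)
            + (outage (fun b a => p a b) (pb q) (pa q) V' γ + γ⁻¹)) := by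
          refine Finset.sum_le_sum fun q _ => mul_le_mul_of_nonneg_left ?_ (hpq.1 q)
          have h1 := sum_userError_le hp hp1 (hpa q) (hpb q) hV hγ
          have h2 := sum_userError_le (p := fun b a => p a b) (fun b a => hp a b) hp1'
            (hpb q) (hpa q) hV' hγ
          simp only [mul_add, Finset.sum_add_distrib]
          refine add_le_add h1 (le_trans (le_of_eq ?_) h2)
          simp only [Finset.mul_sum]
          rw [Finset.sum_comm]
          exact Finset.sum_congr rfl fun g _ => Finset.sum_congr rfl fun f _ =>
            mul_left_comm _ _ _
      _ = _ := by
          simp only [mul_add, Finset.sum_add_distrib, ← Finset.sum_mul, hpq.2]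
          ring
  obtain ⟨q, hq⟩ := exists_le_of_weighted_sum_le hpq havg
  obtain ⟨f, hf⟩ := exists_le_of_weighted_sum_le (isPmf_codeWeight (hpa q)) hq
  obtain ⟨g, hg⟩ := exists_le_of_weighted_sum_le (isPmf_codeWeight (hpb q)) hf
  obtain ⟨d, hd⟩ := exists_decoder_userError hp (pa q) (fun x z => (hV x z).1) γ f g
  obtain ⟨d', hd'⟩ := exists_decoder_userError (p := fun b a => p a b) (fun b a => hp a b)
    (pb q) (fun z x => (hV' z x).1) γ g f
  refine ⟨f, g, d', d, le_trans ?_ (le_trans (add_le_add hd hd') hg)⟩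
  rw [Finset.sum_comm (s := (Finset.univ : Finset B)), ← Finset.sum_add_distrib]
  refine Finset.sum_le_sum fun a _ => ?_
  rw [← Finset.sum_add_distrib]
  refine Finset.sum_le_sum fun b _ => ?_
  simp only [hVdef, hV'def, Finset.mul_sum, Finset.sum_mul]
  rw [Finset.sum_comm (s := (Finset.univ : Finset Y)), ← Finset.sum_add_distrib]
  refine Finset.sum_le_sum fun y' _ => ?_
  rw [← Finset.sum_add_distrib]
  refine Finset.sum_le_sum fun y _ => ?_
  rw [← mul_add]
  refine mul_le_mul_of_nonneg_left ?_ (mul_nonneg (hp a b) (hc _ _ _ _))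
  split_ifs <;> first | tauto | norm_num

end OneShot

section Block

lemma sum_sum_pi {n : ℕ} {α β : Type} [Fintype α] [Fintype β]
    (G : (Fin n → α) → (Fin n → β) → ℝ) :
    ∑ u, ∑ v, G u v = ∑ w : Fin n → α × β, G (fun i => (w i).1) (fun i => (w i).2) := by
  rw [← Fintype.sum_prod_type']
  exact (Fintype.sum_equiv (Equiv.arrowProdEquivProdArrow (Fin n) (fun _ => α) (fun _ => β)) _ _
    fun w => rfl).symm

lemma sum_pi_prod {n : ℕ} {α β : Type} [Fintype α] [Fintype β] (K : (Fin n → α × β) → ℝ) :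
    ∑ w, K w = ∑ u : Fin n → α, ∑ v : Fin n → β, K (fun i => (u i, v i)) :=
  (sum_sum_pi fun u v => K (fun i => (u i, v i))).symm

lemma sum_prod_pi_fin {n : ℕ} {α : Type} [Fintype α] (F : α → ℝ) :
    ∑ u : Fin n → α, ∏ i, F (u i) = (∑ a, F a) ^ n := by
  rw [sum_prod_pi (fun _ => F)]
  simp

lemma isPmf_prod {n : ℕ} {α : Type} [Fintype α] {w : Fin n → α → ℝ} (hw : ∀ i, IsPmf (w i)) :
    IsPmf (fun u : Fin n → α => ∏ i, w i (u i)) :=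
  ⟨fun u => Finset.prod_nonneg fun i _ => (hw i).1 _, by
    rw [sum_prod_pi]
    simp [(hw _).2]⟩

lemma meanScore_block {n : ℕ} {A B X Z Y : Type} [Fintype A] [Fintype X]
    (p : A → B → ℝ) (pa : Fin n → A → X → ℝ) (V : X → Z → Y → ℝ)
    (b : Fin n → B) (z : Fin n → Z) (y : Fin n → Y) :
    meanScore (fun (a : Fin n → A) (x : Fin n → X) => ∏ i, pa i (a i) (x i))
        (pairScore (fun a b => ∏ i, p (a i) (b i)) (fun x z y => ∏ i, V (x i) (z i) (y i)) b z y)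
      = ∏ i, meanScore (pa i) (pairScore p V (b i) (z i) (y i)) := by
  simp only [meanScore, pairScore, ← Finset.prod_mul_distrib]
  rw [sum_sum_pi (fun (a : Fin n → A) (x : Fin n → X) =>
    ∏ i, pa i (a i) (x i) * (p (a i) (b i) * V (x i) (z i) (y i))),
    sum_prod_pi (fun i (w : A × X) => pa i w.1 w.2 * (p w.1 (b i) * V w.2 (z i) (y i)))]
  simp only [Fintype.sum_prod_type]

variable {Q A B X Z Y : Type} [Fintype Q] [Fintype A] [Fintype B] [Fintype X] [Fintype Z]
  [Fintype Y]

/-- Joint single-letter law of `(q, b, y, z, a, x)`. -/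
def letterMass (p : A → B → ℝ) (pq : Q → ℝ) (pa : Q → A → X → ℝ) (pb : Q → B → Z → ℝ)
    (V : X → Z → Y → ℝ) : Q × B × Y × Z × A × X → ℝ :=
  fun ⟨q, b, y, z, a, x⟩ => pq q * (pb q b z * (pa q a x * (p a b * V x z y)))

/-- Log-likelihood ratio used by the threshold decoder. -/
def letterLog (p : A → B → ℝ) (pa : Q → A → X → ℝ) (V : X → Z → Y → ℝ) :
    Q × B × Y × Z × A × X → ℝ :=
  fun ⟨q, b, y, z, a, x⟩ =>
    Real.log (p a b * V x z y) - Real.log (meanScore (pa q) (pairScore p V b z y))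

lemma sum_letterMass {p : A → B → ℝ} (hp1 : ∑ a, ∑ b, p a b = 1)
    {pq : Q → ℝ} (hpq : IsPmf pq)
    {pa : Q → A → X → ℝ} (hpa : ∀ q a, IsPmf (pa q a))
    {pb : Q → B → Z → ℝ} (hpb : ∀ q b, IsPmf (pb q b))
    {V : X → Z → Y → ℝ} (hV : ∀ x z, IsPmf (V x z)) :
    ∑ ω, letterMass p pq pa pb V ω = 1 := by
  simp only [Fintype.sum_prod_type, letterMass]
  calc _ = ∑ q, ∑ b, ∑ z, ∑ a, ∑ x, ∑ y, pq q * (pb q b z * (pa q a x * (p a b * V x z y))) := by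
        refine Finset.sum_congr rfl fun q _ => Finset.sum_congr rfl fun b _ => ?_
        rw [Finset.sum_comm]
        refine Finset.sum_congr rfl fun z _ => ?_
        rw [Finset.sum_comm]
        refine Finset.sum_congr rfl fun a _ => ?_
        rw [Finset.sum_comm]
    _ = ∑ b, ∑ a, p a b := by
        simp only [← Finset.mul_sum, (hV _ _).2, mul_one, ← Finset.sum_mul, (hpa _ _).2,
            (hpb _ _).2, one_mul, hpq.2]
    _ = 1 := by rw [Finset.sum_comm, hp1]

lemma meanScore_pos {pa u : A → X → ℝ} (hpa : ∀ a, IsPmf (pa a)) (hu : ∀ a x, 0 ≤ u a x)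
    {a : A} {x : X} (h : 0 < pa a x * u a x) : 0 < meanScore pa u := by
  have h0 : ∀ a x, 0 ≤ pa a x * u a x := fun a x => mul_nonneg ((hpa a).1 x) (hu a x)
  calc 0 < pa a x * u a x := h
    _ ≤ ∑ x, pa a x * u a x :=
      Finset.single_le_sum (fun x _ => h0 a x) (Finset.mem_univ x)
    _ ≤ meanScore pa u :=
      Finset.single_le_sum (f := fun a => ∑ x, pa a x * u a x)
        (fun a _ => Finset.sum_nonneg fun x _ => h0 a x) (Finset.mem_univ a)

lemma block_term_le {W : Type} {p : A → W → ℝ} (hp : ∀ a b, 0 ≤ p a b)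
    {pq : Q → ℝ} (hpq : IsPmf pq)
    {pa : Q → A → X → ℝ} (hpa : ∀ q a, IsPmf (pa q a))
    {pb : Q → W → Z → ℝ} (hpb : ∀ q b, IsPmf (pb q b))
    {V : X → Z → Y → ℝ} (hV : ∀ x z, IsPmf (V x z)) {ρ : ℝ} (hρ : 0 < ρ) (δ : ℝ) {n : ℕ}
    (w : Fin n → Q × W × Y × Z × A × X) :
    (∏ i, letterMass p pq pa pb V (w i)) *
        (if Real.exp (n * δ) * ∏ i, meanScore (pa (w i).1)
            (pairScore p V (w i).2.1 (w i).2.2.2.1 (w i).2.2.1)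
            < (∏ i, p (w i).2.2.2.2.1 (w i).2.1) *
                ∏ i, V (w i).2.2.2.2.2 (w i).2.2.2.1 (w i).2.2.1 then 0 else 1)
      ≤ ∏ i, letterMass p pq pa pb V (w i) *
          Real.exp (-ρ * (letterLog p pa V (w i) - δ)) := by
  have hm0 : ∀ ω, 0 ≤ letterMass p pq pa pb V ω := fun ⟨q, b, y, z, a, x⟩ =>
    mul_nonneg (hpq.1 q) (mul_nonneg ((hpb q b).1 z) (mul_nonneg ((hpa q a).1 x)
      (mul_nonneg (hp a b) ((hV x z).1 y))))
  rw [Finset.prod_mul_distrib (f := fun i => letterMass p pq pa pb V (w i)),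
    ← Finset.prod_mul_distrib (f := fun i => p (w i).2.2.2.2.1 (w i).2.1)]
  have hprod0 : 0 ≤ ∏ i, letterMass p pq pa pb V (w i) := Finset.prod_nonneg fun i _ => hm0 _
  rcases hprod0.eq_or_lt with h0 | hpos
  · rw [← h0, zero_mul, zero_mul]
  refine mul_le_mul_of_nonneg_left ?_ hprod0
  split_ifs with hlt
  · exact Finset.prod_nonneg fun i _ => (Real.exp_pos _).le
  have hmi : ∀ i, 0 < letterMass p pq pa pb V (w i) := fun i =>
    (hm0 _).lt_of_ne' fun h => hpos.ne' (Finset.prod_eq_zero (Finset.mem_univ i) h)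
  have hfac : ∀ i, 0 < p (w i).2.2.2.2.1 (w i).2.1 *
        V (w i).2.2.2.2.2 (w i).2.2.2.1 (w i).2.2.1 ∧
      0 < meanScore (pa (w i).1) (pairScore p V (w i).2.1 (w i).2.2.2.1 (w i).2.2.1) := by
    intro i
    have h2 := pos_of_mul_pos_right (pos_of_mul_pos_right (hmi i) (hpq.1 (w i).1))
      ((hpb (w i).1 (w i).2.1).1 (w i).2.2.2.1)
    exact ⟨pos_of_mul_pos_right h2 ((hpa _ _).1 _), meanScore_pos (hpa _)
      (fun a x => mul_nonneg (hp a _) ((hV x _).1 _)) h2⟩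
  have hlog := Real.log_le_log (Finset.prod_pos fun i _ => (hfac i).1) (not_lt.1 hlt)
  rw [Real.log_mul (Real.exp_pos _).ne' (Finset.prod_pos fun i _ => (hfac i).2).ne',
    Real.log_exp, Real.log_prod fun i _ => (hfac i).1.ne',
    Real.log_prod fun i _ => (hfac i).2.ne'] at hlog
  rw [← Real.exp_sum, ← Finset.mul_sum, Finset.sum_sub_distrib, Real.one_le_exp_iff]
  have hL : ∑ i, letterLog p pa V (w i) = ∑ i, (Real.log (p (w i).2.2.2.2.1 (w i).2.1 *
        V (w i).2.2.2.2.2 (w i).2.2.2.1 (w i).2.2.1) - Real.log (meanScore (pa (w i).1)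
        (pairScore p V (w i).2.1 (w i).2.2.2.1 (w i).2.2.1))) := rfl
  rw [hL, Finset.sum_sub_distrib]
  simp only [Finset.sum_const, Finset.card_univ, Fintype.card_fin, nsmul_eq_mul]
  nlinarith

lemma exists_block_outage_le {p : A → B → ℝ} (hp : ∀ a b, 0 ≤ p a b)
    (hp1 : ∑ a, ∑ b, p a b = 1) {pq : Q → ℝ} (hpq : IsPmf pq)
    {pa : Q → A → X → ℝ} (hpa : ∀ q a, IsPmf (pa q a))
    {pb : Q → B → Z → ℝ} (hpb : ∀ q b, IsPmf (pb q b))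
    {V : X → Z → Y → ℝ} (hV : ∀ x z, IsPmf (V x z)) {δ : ℝ}
    (hδ : δ < ∑ ω, letterMass p pq pa pb V ω * letterLog p pa V ω) :
    ∃ r : ℝ, 0 ≤ r ∧ r < 1 ∧ ∀ n : ℕ,
      ∑ q : Fin n → Q, (∏ i, pq (q i)) *
        outage (fun (a : Fin n → A) b => ∏ i, p (a i) (b i))
          (fun a (x : Fin n → X) => ∏ i, pa (q i) (a i) (x i))
          (fun (b : Fin n → B) (z : Fin n → Z) => ∏ i, pb (q i) (b i) (z i))
          (fun x z (y : Fin n → Y) => ∏ i, V (x i) (z i) (y i)) (Real.exp (n * δ)) ≤ r ^ n := by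
  have hm1 := sum_letterMass hp1 hpq hpa hpb hV
  have hgap : 0 < ∑ ω, letterMass p pq pa pb V ω * (letterLog p pa V ω - δ) := by
    simp only [mul_sub, Finset.sum_sub_distrib, ← Finset.sum_mul, hm1]
    linarith
  obtain ⟨ρ, hρ, hr⟩ := exists_exp_moment_lt_one hm1 hgap
  refine ⟨_, Finset.sum_nonneg fun ω _ => mul_nonneg ?_ (Real.exp_pos _).le, hr, fun n => ?_⟩
  · obtain ⟨q, b, y, z, a, x⟩ := ω
    exact mul_nonneg (hpq.1 q) (mul_nonneg ((hpb q b).1 z) (mul_nonneg ((hpa q a).1 x)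
      (mul_nonneg (hp a b) ((hV x z).1 y))))
  rw [← sum_prod_pi_fin]
  refine le_trans (le_of_eq ?_)
    (Finset.sum_le_sum fun w _ => block_term_le hp hpq hpa hpb hV hρ δ w)
  simp only [outage, lowScore, meanScore_block, Finset.mul_sum, sum_pi_prod, letterMass,
    Finset.prod_mul_distrib, mul_assoc]
  refine Finset.sum_congr rfl fun q _ => Finset.sum_congr rfl fun b _ =>
    Finset.sum_congr rfl fun y _ => Finset.sum_congr rfl fun z _ =>
    Finset.sum_congr rfl fun a _ => Finset.sum_congr rfl fun x _ => ?_
  simp only [pairScore, mul_assoc]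
  rfl

end Block

section Information

lemma sum_mul_prD {Ω α : Type} [Fintype Ω] [Fintype α] (μ : Ω → ℝ) (X : Ω → α) (F : α → ℝ) :
    ∑ a, prD μ X a * F a = ∑ ω, μ ω * F (X ω) := by
  simp only [prD, Finset.sum_mul]
  rw [Finset.sum_comm]
  refine Finset.sum_congr rfl fun ω _ => ?_
  simp

lemma ent_eq_sum {Ω α : Type} [Fintype Ω] [Fintype α] (μ : Ω → ℝ) (X : Ω → α) :
    ent μ X = -∑ ω, μ ω * Real.log (prD μ X (X ω)) := by
  rw [ent, sum_mul_prD μ X (fun a => Real.log (prD μ X a))]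

lemma ent_comp_equiv {Ω Ω' α : Type} [Fintype Ω] [Fintype Ω'] [Fintype α] (e : Ω ≃ Ω')
    (μ : Ω' → ℝ) (X : Ω' → α) : ent (fun ω => μ (e ω)) (fun ω => X (e ω)) = ent μ X := by
  have h : prD (fun ω => μ (e ω)) (fun ω => X (e ω)) = prD μ X := by
    funext a
    exact Fintype.sum_equiv e _ _ fun ω => rfl
  rw [ent, ent, h]

variable {S1 S2 X1 X2 Y1 Y2 : Type} [Fintype S1] [Fintype S2] [Fintype X1] [Fintype X2]
  [Fintype Y1] [Fintype Y2] {nq : ℕ} {pq : Fin nq → ℝ} {pS : S1 × S2 → ℝ}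
  {px1 : Fin nq → S1 → X1 → ℝ} {px2 : Fin nq → S2 → X2 → ℝ} {chan : X1 → X2 → Y1 × Y2 → ℝ}

lemma prD_twJoint_input_side (hc : ∀ x1 x2, IsPmf (chan x1 x2)) (q : Fin nq) (s2 : S2) (x1 : X1)
    (x2 : X2) :
    prD (twJointMeasure nq pq pS px1 px2 chan) (fun z => (z.2.2.1, (z.2.2.2.1, z.2.1.2, z.1)))
        (x1, (x2, s2, q))
      = pq q * px2 q s2 x2 * ∑ s1, pS (s1, s2) * px1 q s1 x1 := by
  have hs := fun x1 x2 => (hc x1 x2).2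
  simp only [Fintype.sum_prod_type] at hs
  simp only [prD, twJointMeasure, Fintype.sum_prod_type, Prod.mk.injEq, ite_and,
    Finset.sum_ite_irrel, Finset.sum_const_zero, Finset.sum_ite_eq', Finset.mem_univ, if_true,
    ← Finset.mul_sum, hs, mul_one]
  rw [Finset.mul_sum]
  exact Finset.sum_congr rfl fun _ _ => by ring

lemma prD_twJoint_side (hp1 : ∀ q s1, IsPmf (px1 q s1)) (hc : ∀ x1 x2, IsPmf (chan x1 x2))
    (q : Fin nq) (s2 : S2) (x2 : X2) :
    prD (twJointMeasure nq pq pS px1 px2 chan) (fun z => (z.2.2.2.1, z.2.1.2, z.1)) (x2, s2, q)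
      = pq q * px2 q s2 x2 * ∑ s1, pS (s1, s2) := by
  have hs := fun x1 x2 => (hc x1 x2).2
  simp only [Fintype.sum_prod_type] at hs
  simp only [prD, twJointMeasure, Fintype.sum_prod_type, Prod.mk.injEq, ite_and,
    Finset.sum_ite_irrel, Finset.sum_const_zero, Finset.sum_ite_eq', Finset.mem_univ, if_true,
    ← Finset.mul_sum, hs, mul_one, ← Finset.sum_mul, (hp1 _ _).2]
  ring

lemma prD_twJoint_input_output_side (q : Fin nq) (s2 : S2) (x1 : X1) (x2 : X2) (y2 : Y2) :
    prD (twJointMeasure nq pq pS px1 px2 chan)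
        (fun z => (z.2.2.1, (z.2.2.2.2.2, (z.2.2.2.1, z.2.1.2, z.1)))) (x1, (y2, (x2, s2, q)))
      = pq q * px2 q s2 x2 * ((∑ y1, chan x1 x2 (y1, y2)) * ∑ s1, pS (s1, s2) * px1 q s1 x1) := by
  simp only [prD, twJointMeasure, Fintype.sum_prod_type, Prod.mk.injEq, ite_and,
    Finset.sum_ite_irrel, Finset.sum_const_zero, Finset.sum_ite_eq', Finset.mem_univ, if_true,
    ← Finset.mul_sum]
  simp only [Finset.mul_sum (s := (Finset.univ : Finset S1))]
  exact Finset.sum_congr rfl fun _ _ => by ring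

lemma prD_twJoint_output_side (q : Fin nq) (s2 : S2) (x2 : X2) (y2 : Y2) :
    prD (twJointMeasure nq pq pS px1 px2 chan)
        (fun z => (z.2.2.2.2.2, (z.2.2.2.1, z.2.1.2, z.1))) (y2, (x2, s2, q))
      = pq q * px2 q s2 x2 * meanScore (px1 q) (pairScore (fun a b => pS (a, b))
          (fun x z y => ∑ y', chan x z (y', y)) s2 x2 y2) := by
  simp only [prD, twJointMeasure, Fintype.sum_prod_type, Prod.mk.injEq, ite_and,
    Finset.sum_ite_irrel, Finset.sum_const_zero, Finset.sum_ite_eq', Finset.mem_univ, if_true,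
    ← Finset.mul_sum, meanScore, pairScore]
  simp only [Finset.mul_sum (s := (Finset.univ : Finset S1)),
    Finset.mul_sum (s := (Finset.univ : Finset X1))]
  exact Finset.sum_congr rfl fun _ _ => Finset.sum_congr rfl fun _ _ => by ring

lemma sum_twJoint_source (hpq : IsPmf pq) (hp1 : ∀ q s1, IsPmf (px1 q s1))
    (hp2 : ∀ q s2, IsPmf (px2 q s2)) (hc : ∀ x1 x2, IsPmf (chan x1 x2)) (F : S1 × S2 → ℝ) :
    ∑ z, twJointMeasure nq pq pS px1 px2 chan z * F z.2.1 = ∑ s, pS s * F s := by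
  have hs := fun x1 x2 => (hc x1 x2).2
  simp only [Fintype.sum_prod_type] at hs
  simp only [twJointMeasure, Fintype.sum_prod_type, ← Finset.sum_mul, ← Finset.mul_sum, hs,
    mul_one, (hp2 _ _).2, (hp1 _ _).2]
  simp only [mul_assoc, ← Finset.mul_sum, ← Finset.sum_mul, hpq.2, one_mul]

lemma sum_twJoint_eq_letterMass (F : Fin nq × S2 × Y2 × X2 × S1 × X1 → ℝ) :
    ∑ z, twJointMeasure nq pq pS px1 px2 chan z *
        F (z.1, z.2.1.2, z.2.2.2.2.2, z.2.2.2.1, z.2.1.1, z.2.2.1)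
      = ∑ ω, letterMass (fun a b => pS (a, b)) pq px1 px2
          (fun x z y => ∑ y', chan x z (y', y)) ω * F ω := by
  simp only [twJointMeasure, letterMass, Fintype.sum_prod_type]
  refine Finset.sum_congr rfl fun q _ => ?_
  rw [Finset.sum_comm]
  refine Finset.sum_congr rfl fun s2 _ => ?_
  calc _ = ∑ s1, ∑ x1, ∑ x2, ∑ y2, pq q * (px2 q s2 x2 * (px1 q s1 x1 * (pS (s1, s2) *
            ∑ y1, chan x1 x2 (y1, y2)))) * F (q, s2, y2, x2, s1, x1) := by
        refine Finset.sum_congr rfl fun s1 _ => Finset.sum_congr rfl fun x1 _ =>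
          Finset.sum_congr rfl fun x2 _ => ?_
        rw [Finset.sum_comm]
        refine Finset.sum_congr rfl fun y2 _ => ?_
        simp only [Finset.mul_sum, Finset.sum_mul]
        exact Finset.sum_congr rfl fun y1 _ => by ring
    _ = ∑ s1, ∑ y2, ∑ x2, ∑ x1, pq q * (px2 q s2 x2 * (px1 q s1 x1 * (pS (s1, s2) *
            ∑ y1, chan x1 x2 (y1, y2)))) * F (q, s2, y2, x2, s1, x1) := by
        refine Finset.sum_congr rfl fun s1 _ => ?_
        rw [Finset.sum_comm, Finset.sum_comm (s := (Finset.univ : Finset Y2))]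
        refine Finset.sum_congr rfl fun x2 _ => ?_
        rw [Finset.sum_comm]
    _ = _ := by
        rw [Finset.sum_comm]
        refine Finset.sum_congr rfl fun y2 _ => ?_
        rw [Finset.sum_comm]

lemma condMutInf_sub_condEnt_eq (hpS : IsPmf pS) (hpq : IsPmf pq)
    (hp1 : ∀ q s1, IsPmf (px1 q s1)) (hp2 : ∀ q s2, IsPmf (px2 q s2))
    (hc : ∀ x1 x2, IsPmf (chan x1 x2)) :
    condMutInf (twJointMeasure nq pq pS px1 px2 chan) (fun z => z.2.2.1) (fun z => z.2.2.2.2.2)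
        (fun z => (z.2.2.2.1, z.2.1.2, z.1)) - condEnt pS (fun s => s.1) (fun s => s.2)
      = ∑ ω, letterMass (fun a b => pS (a, b)) pq px1 px2 (fun x z y => ∑ y', chan x z (y', y)) ω
          * letterLog (fun a b => pS (a, b)) px1 (fun x z y => ∑ y', chan x z (y', y)) ω := by
  rw [← sum_twJoint_eq_letterMass]
  simp only [condMutInf, condEnt, ent_eq_sum]
  rw [← sum_twJoint_source (pS := pS) hpq hp1 hp2 hc
      (fun s => Real.log (prD pS (fun s => (s.1, s.2)) (s.1, s.2))),
    ← sum_twJoint_source (pS := pS) hpq hp1 hp2 hc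
      (fun s => Real.log (prD pS (fun s => s.2) s.2))]
  simp only [sub_neg_eq_add, ← Finset.sum_neg_distrib, ← Finset.sum_sub_distrib]
  refine Finset.sum_congr rfl fun ⟨q, ⟨s1, s2⟩, x1, x2, y1, y2⟩ _ => ?_
  have hsrc : prD pS (fun s => (s.1, s.2)) (s1, s2) = pS (s1, s2) := by
    simp [prD]
  have hsrc2 : prD pS (fun s => s.2) s2 = ∑ s1, pS (s1, s2) := by
    simp [prD, Fintype.sum_prod_type]
  simp only [prD_twJoint_input_side hc, prD_twJoint_side hp1 hc, prD_twJoint_input_output_side,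
    prD_twJoint_output_side, hsrc, hsrc2, letterLog]
  by_cases h0 : twJointMeasure nq pq pS px1 px2 chan (q, (s1, s2), x1, x2, y1, y2) = 0
  · simp [h0]
  have hne := h0
  simp only [twJointMeasure, mul_ne_zero_iff] at hne
  obtain ⟨⟨⟨⟨hq, hS⟩, h1⟩, h2⟩, hW⟩ := hne
  have hS' := (hpS.1 (s1, s2)).lt_of_ne' hS
  have h1' := ((hp1 q s1).1 x1).lt_of_ne' h1
  have hW' := ((hc x1 x2).1 (y1, y2)).lt_of_ne' hW
  have hV : 0 < ∑ y', chan x1 x2 (y', y2) := hW'.trans_le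
    (Finset.single_le_sum (f := fun y' => chan x1 x2 (y', y2))
      (fun y' _ => (hc x1 x2).1 _) (Finset.mem_univ y1))
  have hN : 0 < ∑ s1, pS (s1, s2) * px1 q s1 x1 := (mul_pos hS' h1').trans_le
    (Finset.single_le_sum (f := fun s1 => pS (s1, s2) * px1 q s1 x1)
      (fun s _ => mul_nonneg (hpS.1 _) ((hp1 q s).1 _)) (Finset.mem_univ s1))
  have hS2 : 0 < ∑ s1, pS (s1, s2) := hS'.trans_le
    (Finset.single_le_sum (f := fun s1 => pS (s1, s2))
      (fun s _ => hpS.1 _) (Finset.mem_univ s1))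
  have hD : 0 < meanScore (px1 q) (pairScore (fun a b => pS (a, b))
          (fun x z y => ∑ y', chan x z (y', y)) s2 x2 y2) :=
    meanScore_pos (hp1 q) (fun a x => mul_nonneg (hpS.1 _)
      (Finset.sum_nonneg fun _ _ => (hc _ _).1 _)) (mul_pos h1' (mul_pos hS' hV))
  rw [Real.log_mul (mul_ne_zero hq h2) hN.ne', Real.log_mul (mul_ne_zero hq h2) hS2.ne',
    Real.log_mul (mul_ne_zero hq h2) (mul_ne_zero hV.ne' hN.ne'), Real.log_mul hV.ne' hN.ne',
    Real.log_mul (mul_ne_zero hq h2) hD.ne', Real.log_mul hS hV.ne']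
  ring

lemma condEnt_swap :
    condEnt pS (fun s => s.2) (fun s => s.1)
      = condEnt (fun s : S2 × S1 => pS s.swap) (fun s => s.1) (fun s => s.2) := by
  rw [condEnt, condEnt]
  congr 1
  · exact ent_comp_equiv (Equiv.prodComm S1 S2) (fun s : S2 × S1 => pS s.swap)
      (fun s => (s.1, s.2))
  · exact ent_comp_equiv (Equiv.prodComm S1 S2) (fun s : S2 × S1 => pS s.swap) (fun s => s.2)

/-- Exchange of the roles of the two users. -/
def swapUsers (Q S1 S2 X1 X2 Y1 Y2 : Type) :
    Q × (S1 × S2) × X1 × X2 × (Y1 × Y2) ≃ Q × (S2 × S1) × X2 × X1 × (Y2 × Y1) where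
  toFun := fun ⟨q, s, x1, x2, y⟩ => (q, s.swap, x2, x1, y.swap)
  invFun := fun ⟨q, s, x2, x1, y⟩ => (q, s.swap, x1, x2, y.swap)
  left_inv _ := rfl
  right_inv _ := rfl

lemma condMutInf_swap :
    condMutInf (twJointMeasure nq pq pS px1 px2 chan) (fun z => z.2.2.2.1)
        (fun z => z.2.2.2.2.1) (fun z => (z.2.2.1, z.2.1.1, z.1))
      = condMutInf (twJointMeasure nq pq (fun s => pS s.swap) px2 px1
            (fun x2 x1 y => chan x1 x2 y.swap))
          (fun z => z.2.2.1) (fun z => z.2.2.2.2.2) (fun z => (z.2.2.2.1, z.2.1.2, z.1)) := by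
  have hμ : twJointMeasure nq pq pS px1 px2 chan = fun z =>
      twJointMeasure nq pq (fun s => pS s.swap) px2 px1 (fun x2 x1 y => chan x1 x2 y.swap)
        (swapUsers _ _ _ _ _ _ _ z) := by
    funext ⟨q, ⟨s1, s2⟩, x1, x2, y1, y2⟩
    simp only [twJointMeasure, swapUsers, Equiv.coe_fn_mk, Prod.swap_prod_mk]
    ring
  have key : ∀ {α : Type} [Fintype α]
      (X : Fin nq × (S2 × S1) × X2 × X1 × (Y2 × Y1) → α),
      ent (twJointMeasure nq pq pS px1 px2 chan)
          (fun z => X (swapUsers _ _ _ _ _ _ _ z))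
        = ent (twJointMeasure nq pq (fun s => pS s.swap) px2 px1
            (fun x2 x1 y => chan x1 x2 y.swap)) X := fun X => by
    rw [hμ, ent_comp_equiv]
  simp only [condMutInf, condEnt]
  exact congrArg₂ _ (congrArg₂ _ (key fun z => (z.2.2.1, (z.2.2.2.1, z.2.1.2, z.1)))
      (key fun z => (z.2.2.2.1, z.2.1.2, z.1)))
    (congrArg₂ _ (key fun z => (z.2.2.1, (z.2.2.2.2.2, (z.2.2.2.1, z.2.1.2, z.1))))
      (key fun z => (z.2.2.2.2.2, (z.2.2.2.1, z.2.1.2, z.1))))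

end Information

lemma twErrRestricted_eq_sum {S1 S2 X1 X2 Y1 Y2 : Type} [Fintype S1] [Fintype S2]
    [Fintype X1] [Fintype X2] [Fintype Y1] [Fintype Y2]
    (pS : S1 × S2 → ℝ) (chan : X1 → X2 → Y1 × Y2 → ℝ) {m n : ℕ}
    (f1 : (Fin m → S1) → Fin n → X1) (f2 : (Fin m → S2) → Fin n → X2)
    (g1 : (Fin m → S1) → (Fin n → Y1) → Fin m → S2)
    (g2 : (Fin m → S2) → (Fin n → Y2) → Fin m → S1) :
    twErrRestricted pS chan m n f1 f2 g1 g2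
      = ∑ a : Fin m → S1, ∑ b : Fin m → S2, ∑ y' : Fin n → Y1, ∑ y : Fin n → Y2,
          (∏ i, pS (a i, b i)) * (∏ j, chan (f1 a j) (f2 b j) (y' j, y j)) *
            (if g1 a y' = b ∧ g2 b y = a then 0 else 1) := by
  simp only [twErrRestricted, sum_pi_prod]

lemma exists_block_code_le_outage
    {S1 S2 X1 X2 Y1 Y2 : Type}
    [Fintype S1] [Fintype S2] [Fintype X1] [Fintype X2] [Fintype Y1] [Fintype Y2]
    {pS : S1 × S2 → ℝ} (hpS : IsPmf pS)
    {chan : X1 → X2 → Y1 × Y2 → ℝ} (hchan : ∀ x1 x2, IsPmf (chan x1 x2))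
    {nq : ℕ} {pq : Fin nq → ℝ} {px1 : Fin nq → S1 → X1 → ℝ} {px2 : Fin nq → S2 → X2 → ℝ}
    (hpq : IsPmf pq) (hp1 : ∀ q s1, IsPmf (px1 q s1)) (hp2 : ∀ q s2, IsPmf (px2 q s2)) {δ : ℝ} {n : ℕ} :
    ∃ (f1 : (Fin n → S1) → Fin n → X1) (f2 : (Fin n → S2) → Fin n → X2)
      (g1 : (Fin n → S1) → (Fin n → Y1) → Fin n → S2)
      (g2 : (Fin n → S2) → (Fin n → Y2) → Fin n → S1),
      twErrRestricted pS chan n n f1 f2 g1 g2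
        ≤ ∑ q : Fin n → Fin nq, (∏ i, pq (q i)) *
            outage (fun (a : Fin n → S1) (b : Fin n → S2) => ∏ i, pS (a i, b i))
              (fun a (x : Fin n → X1) => ∏ i, px1 (q i) (a i) (x i))
              (fun b (z : Fin n → X2) => ∏ i, px2 (q i) (b i) (z i))
              (fun x z (y : Fin n → Y2) => ∏ i, ∑ y', chan (x i) (z i) (y', y i))
              (Real.exp (n * δ))
          + ∑ q : Fin n → Fin nq, (∏ i, pq (q i)) *
            outage (fun (b : Fin n → S2) (a : Fin n → S1) => ∏ i, pS (a i, b i))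
              (fun b (z : Fin n → X2) => ∏ i, px2 (q i) (b i) (z i))
              (fun a (x : Fin n → X1) => ∏ i, px1 (q i) (a i) (x i))
              (fun z x (y' : Fin n → Y1) => ∏ i, ∑ y, chan (x i) (z i) (y' i, y))
              (Real.exp (n * δ))
          + 2 * Real.exp (-δ) ^ n := by
  have hmarg2 : (fun (x : Fin n → X1) (z : Fin n → X2) (y : Fin n → Y2) =>
      ∑ y' : Fin n → Y1, ∏ i, chan (x i) (z i) (y' i, y i))
      = fun x z y => ∏ i, ∑ y', chan (x i) (z i) (y', y i) := by
    funext x z y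
    exact sum_prod_pi fun i y' => chan (x i) (z i) (y', y i)
  have hmarg1 : (fun (z : Fin n → X2) (x : Fin n → X1) (y' : Fin n → Y1) =>
      ∑ y : Fin n → Y2, ∏ i, chan (x i) (z i) (y' i, y i))
      = fun z x y' => ∏ i, ∑ y, chan (x i) (z i) (y' i, y) := by
    funext z x y'
    exact sum_prod_pi fun i y => chan (x i) (z i) (y' i, y)
  obtain ⟨f, g, d', d, hcode⟩ := exists_code
    (p := fun (a : Fin n → S1) (b : Fin n → S2) => ∏ i, pS (a i, b i))
    (pq := fun q : Fin n → Fin nq => ∏ i, pq (q i))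
    (pa := fun q a (x : Fin n → X1) => ∏ i, px1 (q i) (a i) (x i))
    (pb := fun q b (z : Fin n → X2) => ∏ i, px2 (q i) (b i) (z i))
    (c := fun x z (y' : Fin n → Y1) (y : Fin n → Y2) => ∏ i, chan (x i) (z i) (y' i, y i))
    (fun a b => Finset.prod_nonneg fun i _ => hpS.1 _)
    (by
      rw [sum_sum_pi (fun (a : Fin n → S1) (b : Fin n → S2) => ∏ i, pS (a i, b i))]
      exact (isPmf_prod fun _ => hpS).2)
    (isPmf_prod fun _ => hpq) (fun q a => isPmf_prod fun i => hp1 (q i) (a i))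
    (fun q b => isPmf_prod fun i => hp2 (q i) (b i))
    (fun x z y' y => Finset.prod_nonneg fun i _ => (hchan _ _).1 _)
    (fun x z => by
      rw [sum_sum_pi (fun (y' : Fin n → Y1) (y : Fin n → Y2) =>
        ∏ i, chan (x i) (z i) (y' i, y i))]
      exact (isPmf_prod fun i => hchan (x i) (z i)).2)
    (Real.exp_pos (n * δ))
  refine ⟨f, g, d', d, ?_⟩
  have hinv : (Real.exp (n * δ))⁻¹ = Real.exp (-δ) ^ n := by
    rw [← Real.exp_neg, ← mul_neg, Real.exp_nat_mul]
  rw [hmarg1, hmarg2, hinv] at hcode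
  rw [twErrRestricted_eq_sum]
  refine le_of_eq_of_le ?_ hcode
  refine Finset.sum_congr rfl fun a _ => Finset.sum_congr rfl fun b _ =>
    Finset.sum_congr rfl fun y' _ => Finset.sum_congr rfl fun y _ => ?_
  congr 1
  split_ifs <;> rfl

lemma exists_block_code
    {S1 S2 X1 X2 Y1 Y2 : Type}
    [Fintype S1] [Fintype S2] [Fintype X1] [Fintype X2] [Fintype Y1] [Fintype Y2]
    {pS : S1 × S2 → ℝ} (hpS : IsPmf pS)
    {chan : X1 → X2 → Y1 × Y2 → ℝ} (hchan : ∀ x1 x2, IsPmf (chan x1 x2))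
    {nq : ℕ} {pq : Fin nq → ℝ} {px1 : Fin nq → S1 → X1 → ℝ} {px2 : Fin nq → S2 → X2 → ℝ}
    (hpq : IsPmf pq) (hp1 : ∀ q s1, IsPmf (px1 q s1)) (hp2 : ∀ q s2, IsPmf (px2 q s2)) {δ : ℝ}
    (h1 : δ < ∑ ω, letterMass (fun a b => pS (a, b)) pq px1 px2
        (fun x z y => ∑ y', chan x z (y', y)) ω *
      letterLog (fun a b => pS (a, b)) px1 (fun x z y => ∑ y', chan x z (y', y)) ω)
    (h2 : δ < ∑ ω, letterMass (fun b a => pS (a, b)) pq px2 px1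
        (fun z x y' => ∑ y, chan x z (y', y)) ω *
      letterLog (fun b a => pS (a, b)) px2 (fun z x y' => ∑ y, chan x z (y', y)) ω) :
    ∃ r r' : ℝ, (0 ≤ r ∧ r < 1) ∧ (0 ≤ r' ∧ r' < 1) ∧ ∀ n : ℕ,
      ∃ (f1 : (Fin n → S1) → Fin n → X1) (f2 : (Fin n → S2) → Fin n → X2)
        (g1 : (Fin n → S1) → (Fin n → Y1) → Fin n → S2)
        (g2 : (Fin n → S2) → (Fin n → Y2) → Fin n → S1),
        twErrRestricted pS chan n n f1 f2 g1 g2 ≤ r ^ n + r' ^ n + 2 * Real.exp (-δ) ^ n := by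
  set p : S1 → S2 → ℝ := fun a b => pS (a, b) with hp
  set V2 : X1 → X2 → Y2 → ℝ := fun x z y => ∑ y', chan x z (y', y) with hV2
  set V1 : X2 → X1 → Y1 → ℝ := fun z x y' => ∑ y, chan x z (y', y) with hV1
  have hpnn : ∀ a b, 0 ≤ p a b := fun a b => hpS.1 _
  have hpsum : ∑ a, ∑ b, p a b = 1 := by
    rw [← hpS.2, Fintype.sum_prod_type]
  have hpsum' : ∑ b, ∑ a, p a b = 1 := by
    rw [Finset.sum_comm, hpsum]
  have hV2pmf : ∀ x z, IsPmf (V2 x z) := fun x z =>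
    ⟨fun y => Finset.sum_nonneg fun y' _ => (hchan x z).1 _, by
      rw [← (hchan x z).2, Fintype.sum_prod_type, Finset.sum_comm]⟩
  have hV1pmf : ∀ z x, IsPmf (V1 z x) := fun z x =>
    ⟨fun y => Finset.sum_nonneg fun y' _ => (hchan x z).1 _, by
      rw [← (hchan x z).2, Fintype.sum_prod_type]⟩
  obtain ⟨r, hr0, hr1, hr⟩ := exists_block_outage_le hpnn hpsum hpq hp1 hp2 hV2pmf h1
  obtain ⟨r', hr0', hr1', hr'⟩ := exists_block_outage_le (p := fun b a => p a b)
    (fun b a => hpnn a b) hpsum' hpq hp2 hp1 hV1pmf h2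
  refine ⟨r, r', ⟨hr0, hr1⟩, ⟨hr0', hr1'⟩, fun n => ?_⟩
  obtain ⟨f1, f2, g1, g2, hle⟩ :=
    exists_block_code_le_outage hpS hchan hpq hp1 hp2 (δ := δ) (n := n)
  exact ⟨f1, f2, g1, g2, hle.trans
    (add_le_add (add_le_add (hr n) (hr' n)) (le_refl (2 * Real.exp (-δ) ^ n)))⟩

/-- For arbitrarily correlated sources `(S1, S2)` over a DM two-way
channel `p(y1,y2|x1,x2)`, source-channel rate `b = 1` is achievable (with restricted
encoders) if `H(S1|S2) < I(X1;Y2|X2,S2,Q)` and `H(S2|S1) < I(X2;Y1|X1,S1,Q)` for some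
joint distribution `p(q)p(s1,s2)p(x1|q,s1)p(x2|q,s2)p(y1,y2|x1,x2)`. -/
theorem two_way_correlated_sources_rate_one_achievable
    {S1 S2 X1 X2 Y1 Y2 : Type}
    [Fintype S1] [Fintype S2] [Fintype X1] [Fintype X2] [Fintype Y1] [Fintype Y2]
    (pS : S1 × S2 → ℝ) (hpS : IsPmf pS)
    (chan : X1 → X2 → Y1 × Y2 → ℝ) (hchan : ∀ x1 x2, IsPmf (chan x1 x2))
    (h : ∃ (nq : ℕ) (pq : Fin nq → ℝ)
      (px1 : Fin nq → S1 → X1 → ℝ) (px2 : Fin nq → S2 → X2 → ℝ),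
      IsPmf pq ∧ (∀ q s1, IsPmf (px1 q s1)) ∧ (∀ q s2, IsPmf (px2 q s2)) ∧
      (condEnt pS (fun s => s.1) (fun s => s.2) <
        condMutInf (twJointMeasure nq pq pS px1 px2 chan)
          (fun z => z.2.2.1) (fun z => z.2.2.2.2.2)
          (fun z => (z.2.2.2.1, z.2.1.2, z.1))) ∧
      (condEnt pS (fun s => s.2) (fun s => s.1) <
        condMutInf (twJointMeasure nq pq pS px1 px2 chan)
          (fun z => z.2.2.2.1) (fun z => z.2.2.2.2.1)
          (fun z => (z.2.2.1, z.2.1.1, z.1)))) :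
    twAchievableRestricted pS chan 1 := by
  obtain ⟨nq, pq, px1, px2, hpq, hp1, hp2, h1, h2⟩ := h
  have hpS' : IsPmf (fun s : S2 × S1 => pS s.swap) :=
    ⟨fun s => hpS.1 _, by
      rw [← hpS.2]
      exact Fintype.sum_equiv (Equiv.prodComm S2 S1) _ _ fun s => rfl⟩
  have hchan' : ∀ x2 x1, IsPmf (fun y : Y2 × Y1 => chan x1 x2 y.swap) := fun x2 x1 =>
    ⟨fun y => (hchan x1 x2).1 _, by
      rw [← (hchan x1 x2).2]
      exact Fintype.sum_equiv (Equiv.prodComm Y2 Y1) _ _ fun s => rfl⟩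
  rw [condEnt_swap, condMutInf_swap] at h2
  rw [← sub_pos, condMutInf_sub_condEnt_eq hpS hpq hp1 hp2 hchan] at h1
  rw [← sub_pos, condMutInf_sub_condEnt_eq hpS' hpq hp2 hp1 hchan'] at h2
  obtain ⟨δ, hδ, hδlt⟩ := exists_between (lt_min h1 h2)
  obtain ⟨r, r', ⟨hr0, hr1⟩, ⟨hr0', hr1'⟩, hcode⟩ := exists_block_code hpS hchan hpq hp1 hp2
    (lt_of_lt_of_le hδlt (min_le_left _ _)) (lt_of_lt_of_le hδlt (min_le_right _ _))
  intro ε hε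
  have hexp : Real.exp (-δ) < 1 := Real.exp_lt_one_iff.2 (neg_lt_zero.2 hδ)
  have hlim : Filter.Tendsto (fun n : ℕ => r ^ n + r' ^ n + 2 * Real.exp (-δ) ^ n)
      Filter.atTop (nhds (0 + 0 + 2 * 0)) :=
    ((tendsto_pow_atTop_nhds_zero_of_lt_one hr0 hr1).add
      (tendsto_pow_atTop_nhds_zero_of_lt_one hr0' hr1')).add
      ((tendsto_pow_atTop_nhds_zero_of_lt_one (Real.exp_pos _).le hexp).const_mul 2)
  obtain ⟨n, hnε, hn⟩ := ((hlim.eventually (gt_mem_nhds (by simpa using hε))).and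
    (Filter.eventually_gt_atTop 0)).exists
  obtain ⟨f1, f2, g1, g2, hle⟩ := hcode n
  exact ⟨n, n, hn, hn, (one_mul _).symm, f1, f2, g1, g2, hle.trans_lt hnε⟩
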